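/- Let A_ψ be the 3×3 real matrix with (A_ψ)₁₂ = (A_ψ)₂₃ = 1 and all other entries 0, C_ψ the 1×3 real matrix [1 0 0], and B_{ω,ψ} the 3×1 real matrix (0,0,1)ᵀ. Let P be a symmetric positive-definite real 3×3 matrix and W a real 3×1 matrix such that A_ψᵀ·P + P·A_ψ + C_ψᵀ·Wᵀ + W·C_ψ + I₃ is negative semidefinite, and set L := −P⁻¹·W. Let ω : ℝ → ℝ satisfy |ω(t)| ≤ ω* for all t, let θ ∈ (0,1), set ρ := 2·‖P·B_{ω,ψ}‖·ω*/θ, and let e : ℝ → ℝ³ be differentiable with e'(t) = (A_ψ − L·C_ψ)·e(t) + B_{ω,ψ}·ω(t) for all t. Let c > 0 be such that every x ∈ ℝ³ with (1/2)·xᵀ·P·x ≥ c satisfies ‖x‖ ≥ ρ. If (1/2)·e(t₀)ᵀ·P·e(t₀) ≤ c for some t₀, then (1/2)·e(t)ᵀ·P·e(t) ≤ c for all t ≥ t₀. -/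

import Mathlib

/-!
The function `V x = xᵀPx / 2` is a Lyapunov function for the error dynamics. Since `P L = -W`, the
linear matrix inequality says exactly that `xᵀP(A_ψ - L C_ψ)x ≤ -‖x‖²/2`, so by Cauchy–Schwarz
`V' ≤ -‖x‖²/2 + ‖x‖ ‖P B_{ω,ψ}‖ ω*` along trajectories. On the level `V = c` one has `ρ ≤ ‖x‖`,
i.e. `‖P B_{ω,ψ}‖ ω* ≤ θ‖x‖/2`, hence `V' ≤ -(1 - θ)‖x‖²/2 < 0` there (`x ≠ 0` because `c > 0`).
A function whose derivative is negative whenever it takes the value `c` cannot cross `c` upwards;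
this last step is `image_le_of_deriv_right_lt_deriv_boundary`.
-/

open Matrix

/-- The Euclidean norm of a vector in `ℝⁿ`. -/
noncomputable def euclNorm {n : ℕ} (x : Fin n → ℝ) : ℝ := Real.sqrt (∑ i, x i ^ 2)

/-- The rotational system matrix `A_ψ`. -/
def Aψ : Matrix (Fin 3) (Fin 3) ℝ := !![0, 1, 0; 0, 0, 1; 0, 0, 0]

/-- The rotational output matrix `C_ψ = [1 0 0]`. -/
def Cψ : Matrix (Fin 1) (Fin 3) ℝ := !![1, 0, 0]

/-- The rotational disturbance input matrix `B_{ω,ψ} = (0,0,1)ᵀ`. -/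
def Bωψ : Matrix (Fin 3) (Fin 1) ℝ := !![0; 0; 1]

lemma euclNorm_sq {n : ℕ} (x : Fin n → ℝ) : euclNorm x ^ 2 = x ⬝ᵥ x := by
  unfold euclNorm
  rw [Real.sq_sqrt (Finset.sum_nonneg fun i _ => sq_nonneg _)]
  simp [dotProduct, sq]

lemma euclNorm_nonneg {n : ℕ} (x : Fin n → ℝ) : 0 ≤ euclNorm x := Real.sqrt_nonneg _

/-- The Cauchy–Schwarz inequality. -/
lemma abs_dotProduct_le {n : ℕ} (x y : Fin n → ℝ) : |x ⬝ᵥ y| ≤ euclNorm x * euclNorm y := by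
  unfold euclNorm
  rw [← Real.sqrt_mul (Finset.sum_nonneg fun i _ => sq_nonneg _)]
  exact Real.abs_le_sqrt (Finset.sum_mul_sq_le_sq_mul_sq _ _ _)

lemma hasDerivAt_dotProduct {n : ℕ} {f g : ℝ → Fin n → ℝ} {f' g' : Fin n → ℝ} {t : ℝ}
    (hf : HasDerivAt f f' t) (hg : HasDerivAt g g' t) :
    HasDerivAt (fun s => f s ⬝ᵥ g s) (f' ⬝ᵥ g t + f t ⬝ᵥ g') t := by
  rw [hasDerivAt_pi] at hf hg
  simp only [dotProduct, ← Finset.sum_add_distrib]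
  exact HasDerivAt.fun_sum fun i _ => (hf i).mul (hg i)

lemma hasDerivAt_mulVec {m n : ℕ} (P : Matrix (Fin m) (Fin n) ℝ) {f : ℝ → Fin n → ℝ}
    {f' : Fin n → ℝ} {t : ℝ} (hf : HasDerivAt f f' t) :
    HasDerivAt (fun s => P.mulVec (f s)) (P.mulVec f') t := by
  rw [hasDerivAt_pi] at hf ⊢
  intro i
  simp only [mulVec, dotProduct]
  exact HasDerivAt.fun_sum fun j _ => (hf j).const_mul (P i j)

/-- For symmetric `P`, the two terms of the product rule for `xᵀPx / 2` coincide. -/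
lemma hasDerivAt_lyapunov {n : ℕ} {P : Matrix (Fin n) (Fin n) ℝ} (hP : Pᵀ = P)
    {f : ℝ → Fin n → ℝ} {f' : Fin n → ℝ} {t : ℝ} (hf : HasDerivAt f f' t) :
    HasDerivAt (fun s => (1 / 2) * (f s ⬝ᵥ P.mulVec (f s))) (f t ⬝ᵥ P.mulVec f') t := by
  have h := (hasDerivAt_dotProduct hf (hasDerivAt_mulVec P hf)).const_mul (1 / 2 : ℝ)
  have hs : f' ⬝ᵥ P.mulVec (f t) = f t ⬝ᵥ P.mulVec f' := by
    rw [dotProduct_mulVec, ← mulVec_transpose, hP, dotProduct_comm]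
  rw [hs] at h
  exact h.congr_deriv (by ring)

/-- The linear matrix inequality in terms of the closed-loop matrix: `P(A_ψ - L C_ψ)` has symmetric
part at most `-I/2`. -/
lemma dotProduct_closedLoop_le {P : Matrix (Fin 3) (Fin 3) ℝ} {W L : Matrix (Fin 3) (Fin 1) ℝ}
    (hP : P.PosDef)
    (hLMI : (-(Aψᵀ * P + P * Aψ + Cψᵀ * Wᵀ + W * Cψ + 1)).PosSemidef)
    (hL : L = -(P⁻¹ * W)) (x : Fin 3 → ℝ) :
    x ⬝ᵥ P.mulVec ((Aψ - L * Cψ).mulVec x) ≤ -(euclNorm x ^ 2) / 2 := by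
  have hT : Pᵀ = P := by simpa [IsHermitian] using hP.isHermitian
  have hPL : P * L = -W := by
    rw [hL, Matrix.mul_neg, ← Matrix.mul_assoc, Matrix.mul_nonsing_inv _ hP.det_pos.ne'.isUnit,
      Matrix.one_mul]
  have hS : P * (Aψ - L * Cψ) = P * Aψ + W * Cψ := by
    rw [Matrix.mul_sub, ← Matrix.mul_assoc, hPL]; simp
  have hsum : Aψᵀ * P + P * Aψ + Cψᵀ * Wᵀ + W * Cψ + 1
      = (P * Aψ + W * Cψ)ᵀ + (P * Aψ + W * Cψ) + 1 := by
    rw [transpose_add, transpose_mul, transpose_mul, hT]; abel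
  rw [mulVec_mulVec, hS, euclNorm_sq]
  have h := hLMI.dotProduct_mulVec_nonneg x
  rw [hsum] at h
  have hsym : x ⬝ᵥ (P * Aψ + W * Cψ)ᵀ.mulVec x = x ⬝ᵥ (P * Aψ + W * Cψ).mulVec x := by
    rw [mulVec_transpose, dotProduct_comm, dotProduct_mulVec]
  simp only [star_trivial, neg_mulVec, dotProduct_neg, add_mulVec _ (1 : Matrix _ _ ℝ),
    add_mulVec _ (P * Aψ + W * Cψ), dotProduct_add, one_mulVec, hsym] at h
  linarith

/-- Forward-invariance (ultimate-boundedness) consequence of Theorem 1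
(eqs. (27)–(28)): once a Lyapunov level set containing the ball of radius
`ρ = 2‖P·B_{ω,ψ}‖ω*/θ` is reached, the rotational estimation error never
leaves it. -/
theorem stmt_5 (P : Matrix (Fin 3) (Fin 3) ℝ) (W : Matrix (Fin 3) (Fin 1) ℝ)
    (hP : P.PosDef)
    (hLMI : (-(Aψᵀ * P + P * Aψ + Cψᵀ * Wᵀ + W * Cψ + 1)).PosSemidef)
    (L : Matrix (Fin 3) (Fin 1) ℝ) (hL : L = -(P⁻¹ * W))
    (ω : ℝ → ℝ) (ωstar : ℝ) (hω : ∀ t, |ω t| ≤ ωstar)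
    (θ : ℝ) (hθ : θ ∈ Set.Ioo (0 : ℝ) 1)
    (ρ : ℝ) (hρ : ρ = 2 * euclNorm (fun i => (P * Bωψ) i 0) * ωstar / θ)
    (e : ℝ → Fin 3 → ℝ)
    (he : ∀ t, HasDerivAt e ((Aψ - L * Cψ).mulVec (e t) + Bωψ.mulVec ![ω t]) t)
    (c : ℝ) (hc : 0 < c)
    (hlevel : ∀ x : Fin 3 → ℝ, c ≤ (1 / 2) * (x ⬝ᵥ P.mulVec x) → ρ ≤ euclNorm x)
    (t₀ : ℝ) (h₀ : (1 / 2) * (e t₀ ⬝ᵥ P.mulVec (e t₀)) ≤ c) :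
    ∀ t, t₀ ≤ t → (1 / 2) * (e t ⬝ᵥ P.mulVec (e t)) ≤ c := by
  intro t ht
  have hT : Pᵀ = P := by simpa [IsHermitian] using hP.isHermitian
  have hd := fun s => hasDerivAt_lyapunov hT (he s)
  refine image_le_of_deriv_right_lt_deriv_boundary (a := t₀) (b := t) (B := fun _ => c)
    (B' := fun _ => 0) (fun s _ => (hd s).continuousAt.continuousWithinAt)
    (fun s _ => (hd s).hasDerivWithinAt) h₀ (fun s => hasDerivAt_const s c) ?_
    (Set.right_mem_Icc.2 ht)
  intro s _ hs
  have hlev := hlevel (e s) hs.ge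
  have hpos : 0 < euclNorm (e s) := by
    refine (euclNorm_nonneg _).lt_of_ne fun h0 => ?_
    have hx : e s = 0 := by
      rw [← dotProduct_self_eq_zero, ← euclNorm_sq, ← h0]; norm_num
    simp only [hx, zero_dotProduct, mul_zero] at hs
    exact hc.ne hs
  -- `ω s` enters the equation as a one-entry vector; rewrite its contribution as a scalar multiple.
  have hB : P.mulVec (Bωψ.mulVec ![ω s]) = ω s • fun i => (P * Bωψ) i 0 := by
    rw [mulVec_mulVec]
    ext i
    simp [mulVec, dotProduct, mul_comm]
  have hlin := dotProduct_closedLoop_le hP hLMI hL (e s)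
  have hcs := abs_dotProduct_le (e s) fun i => (P * Bωψ) i 0
  rw [mulVec_add, dotProduct_add, hB, dotProduct_smul, smul_eq_mul]
  have hdist : ω s * (e s ⬝ᵥ fun i => (P * Bωψ) i 0)
      ≤ ωstar * (euclNorm (e s) * euclNorm fun i => (P * Bωψ) i 0) :=
    (le_abs_self _).trans <| by
      rw [abs_mul]
      exact mul_le_mul (hω s) hcs (abs_nonneg _) ((abs_nonneg _).trans (hω s))
  -- Clear the denominator `θ` in `ρ ≤ ‖e s‖`, then multiply by `‖e s‖` to match `hdist`.
  rw [hρ, div_le_iff₀ hθ.1] at hlev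
  have h1 := mul_le_mul_of_nonneg_right hlev hpos.le
  have h2 : 0 < (1 - θ) * euclNorm (e s) ^ 2 := mul_pos (sub_pos.2 hθ.2) (pow_pos hpos 2)
  nlinarith
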